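/- arXiv:2404.04822 — 2 statements merged into one kernel-verified Lean document; each statement's English description precedes it below -/
import Mathlib

section
/- On the responsive domain ℛ, every marginal rule satisfying individual rationality (IR) also satisfies balancedness (BAL) and the worst-endowment lower bound (WELB). -/
/-
A marginal rule cannot distinguish responsive preferences with the same marginals, so the bundle it
assigns must be weakly better than the endowment for every responsive extension of an agent's
marginal preference. For each upper set `U` of objects, one such extension ranks bundles first by
their number of objects in `U`, breaking ties by the colexicographic order. Hence each agent
receives at least as many objects in `U` as she owns. With `U = O` this gives balancedness, because
bundle sizes add up to `|O|` in every allocation. With `U` the set of objects at least as good as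
the worst object of the endowment, balancedness forces the whole bundle into `U`.
-/

attribute [local instance] Classical.propDecidable

namespace Realloc

/-- A strict preference over bundles: a strict total order on `Finset O`. -/
structure Pref (O : Type) : Type where
  strict : Finset O → Finset O → Prop
  total : ∀ X Y : Finset O, strict X Y ∨ X = Y ∨ strict Y X
  irrefl : ∀ X : Finset O, ¬ strict X X
  trans : ∀ X Y Z : Finset O, strict X Y → strict Y Z → strict X Z

/-- The weak ("at least as good as") relation associated with a strict preference. -/
def Pref.weak {O : Type} (p : Pref O) (X Y : Finset O) : Prop :=
  p.strict X Y ∨ X = Y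

/-- An allocation: nonempty pairwise disjoint bundles whose union is all of `O`. -/
structure Allocation (N O : Type) : Type where
  bundle : N → Finset O
  nonempty : ∀ i : N, (bundle i).Nonempty
  disj : ∀ i j : N, i ≠ j → ∀ o : O, o ∈ bundle i → o ∉ bundle j
  cover : ∀ o : O, ∃ i : N, o ∈ bundle i

variable {N O : Type}

/-- Two preferences induce the same marginal (singleton) ranking over objects. -/
def MargEq (p q : Pref O) : Prop :=
  ∀ x y : O, p.strict {x} {y} ↔ q.strict {x} {y}

/-- Responsive preferences. -/
def Responsive [DecidableEq O] (p : Pref O) : Prop :=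
  ∀ (X : Finset O) (y z : O), y ∉ X → z ∉ X →
    (p.strict (insert y X) (insert z X) ↔ p.strict {y} {z})

/-- Lexicographic preferences: `X` is preferred to `Y` iff the best object of the
symmetric difference belongs to `X`. -/
def Lexicographic [DecidableEq O] (p : Pref O) : Prop :=
  ∀ X Y : Finset O, X ≠ Y →
    (p.strict X Y ↔
      ∃ x ∈ X \ Y, ∀ y ∈ (X \ Y) ∪ (Y \ X), y ≠ x → p.strict {x} {y})

/-- Conditionally lexicographic preferences. -/
def CondLex [DecidableEq O] (p : Pref O) : Prop :=
  ∀ X Y : Finset O, Disjoint X Y → X.Nonempty →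
    ∃! x : O, x ∈ X ∧ ∀ Z : Finset O, Z ⊆ X.erase x → p.strict (insert x Y) (Y ∪ Z)

/-- Monotonic preferences. -/
def Monot (p : Pref O) : Prop :=
  ∀ X Y : Finset O, Y ⊆ X → p.weak X Y

/-- `p'` is a subset-drop strategy for `p` (relative to endowment `ωi`):
some set `X ⊆ O ∖ ωi` is moved to the bottom of the marginal ranking, preserving
the relative marginal order within `X` and within its complement. -/
def SubsetDropStrategy (ωi : Finset O) (p p' : Pref O) : Prop :=
  ∃ X : Set O, (∀ x ∈ X, x ∉ ωi) ∧
    (∀ x ∈ X, ∀ y ∈ X, (p.strict {x} {y} ↔ p'.strict {x} {y})) ∧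
    (∀ x ∉ X, ∀ y ∉ X, (p.strict {x} {y} ↔ p'.strict {x} {y})) ∧
    (∀ x ∈ X, ∀ y ∉ X, p'.strict {y} {x})

/-- `p'` is a drop strategy for `p`: a single object `x ∉ ωi` is moved to the bottom. -/
def DropStrategy (ωi : Finset O) (p p' : Pref O) : Prop :=
  ∃ x : O, x ∉ ωi ∧
    (∀ u v : O, u ≠ x → v ≠ x → (p.strict {u} {v} ↔ p'.strict {u} {v})) ∧
    (∀ y : O, y ≠ x → p'.strict {y} {x})

/-- `p'` is a truncation strategy for `p`: the tail set
`{o ∈ O ∖ ωi : {x} R {o}}` (for some object `x`) is moved to the bottom. -/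
def TruncationStrategy (ωi : Finset O) (p p' : Pref O) : Prop :=
  ∃ x : O,
    (∀ u v : O, (u ∉ ωi ∧ p.weak {x} {u}) → (v ∉ ωi ∧ p.weak {x} {v}) →
      (p.strict {u} {v} ↔ p'.strict {u} {v})) ∧
    (∀ u v : O, ¬(u ∉ ωi ∧ p.weak {x} {u}) → ¬(v ∉ ωi ∧ p.weak {x} {v}) →
      (p.strict {u} {v} ↔ p'.strict {u} {v})) ∧
    (∀ u v : O, (u ∉ ωi ∧ p.weak {x} {u}) → ¬(v ∉ ωi ∧ p.weak {x} {v}) →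
      p'.strict {v} {u})

/-- There is a Pareto-improving trading cycle at the assignment `μ`:
a cyclic sequence of `k+1 ≥ 1` distinct objects and distinct agents, each object owned
(at `μ`) by its agent, such that every agent on the cycle strictly gains by swapping
the object she relinquishes for the object she points to. -/
def ParetoImprovingCycleAt [DecidableEq O] (pref : N → Pref O) (μ : N → Finset O) : Prop :=
  ∃ (k : ℕ) (obj : Fin (k + 1) → O) (ag : Fin (k + 1) → N),
    Function.Injective obj ∧ Function.Injective ag ∧
    (∀ ℓ : Fin (k + 1), obj ℓ ∈ μ (ag ℓ)) ∧
    (∀ ℓ : Fin (k + 1),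
      (pref (ag ℓ)).strict ((insert (obj (ℓ + 1)) (μ (ag ℓ))).erase (obj ℓ)) (μ (ag ℓ)))

/-- Individual-good efficiency of an assignment at a profile. -/
def IGEat [DecidableEq O] (pref : N → Pref O) (μ : N → Finset O) : Prop :=
  ¬ ParetoImprovingCycleAt pref μ

/-- `ν` Pareto dominates `μ` at the profile `pref`. -/
def ParetoDominates (pref : N → Pref O) (ν μ : N → Finset O) : Prop :=
  (∀ i, (pref i).weak (ν i) (μ i)) ∧ ∃ j, (pref j).strict (ν j) (μ j)

/-- Pareto efficiency of an assignment at a profile. -/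
def ParetoEffAt (pref : N → Pref O) (μ : N → Finset O) : Prop :=
  ∀ ν : Allocation N O, ¬ ParetoDominates pref ν.bundle μ

/-- The marginally most-preferred object of a (nonempty) finite set of objects. -/
noncomputable def Pref.best [Nonempty O] (p : Pref O) (S : Finset O) : O :=
  if h : ∃ x : O, x ∈ S ∧ ∀ y ∈ S, p.weak {x} {y} then h.choose
  else Classical.arbitrary O

/-- The conditionally most-preferred object of `S` given the already-held bundle `Y`. -/
noncomputable def Pref.cbest [Nonempty O] [DecidableEq O] (p : Pref O) (S Y : Finset O) : O :=
  if h : ∃ x : O, x ∈ S ∧ ∀ Z : Finset O, Z ⊆ S.erase x → p.strict (insert x Y) (Y ∪ Z)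
  then h.choose else Classical.arbitrary O

/-- The initial owner of an object. -/
noncomputable def Allocation.owner (ω : Allocation N O) (o : O) : N :=
  (ω.cover o).choose

/-- One pass of the generalized TTC algorithm, with fuel.  At each step every agent points
to her marginally best remaining object and every remaining object points to its owner;
the objects lying on cycles of this functional graph (the periodic points of `g`) are
traded: the owner of a cycling object receives the object she points to. -/
noncomputable def TTCaux [Nonempty O] [DecidableEq O] (pref : N → Pref O) (own : O → N) :
    ℕ → Finset O → N → Finset O
  | 0, _, _ => ∅
  | fuel + 1, S, i =>
      let g : O → O := fun o => (pref (own o)).best S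
      let C : Finset O := S.filter fun o => ∃ k : ℕ, 0 < k ∧ g^[k] o = o
      if S.Nonempty then
        ((C.filter fun o => own o = i).image g) ∪ TTCaux pref own fuel (S \ C) i
      else ∅

/-- The generalized Top Trading Cycles rule: the bundle received by agent `i`. -/
noncomputable def TTC [Fintype O] [Nonempty O] [DecidableEq O]
    (pref : N → Pref O) (ω : Allocation N O) (i : N) : Finset O :=
  TTCaux pref ω.owner (Fintype.card O + 1) Finset.univ i

/-- One pass of the Augmented TTC algorithm, with fuel: agents point to their
conditionally most-preferred remaining object given the bundle assigned so far. -/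
noncomputable def ATTCaux [Nonempty O] [DecidableEq O] (pref : N → Pref O) (own : O → N) :
    ℕ → Finset O → (N → Finset O) → N → Finset O
  | 0, _, μ => μ
  | fuel + 1, S, μ =>
      let g : O → O := fun o => (pref (own o)).cbest S (μ (own o))
      let C : Finset O := S.filter fun o => ∃ k : ℕ, 0 < k ∧ g^[k] o = o
      if S.Nonempty then
        ATTCaux pref own fuel (S \ C) (fun j => μ j ∪ ((C.filter fun o => own o = j).image g))
      else μ

/-- The Augmented Top Trading Cycles rule: the bundle received by agent `i`. -/
noncomputable def ATTC [Fintype O] [Nonempty O] [DecidableEq O]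
    (pref : N → Pref O) (ω : Allocation N O) (i : N) : Finset O :=
  ATTCaux pref ω.owner (Fintype.card O + 1) Finset.univ (fun _ => ∅) i

/-- Conditional marginal preference of `p` given the bundle `Y`:
`x` is conditionally better than `y`. -/
def CMarg [DecidableEq O] (p : Pref O) (Y : Finset O) (x y : O) : Prop :=
  p.strict ((insert x Y).erase y) ((insert y Y).erase x)

/-- Weak conditional marginal preference. -/
def CMargWeak [DecidableEq O] (p : Pref O) (Y : Finset O) (x y : O) : Prop :=
  CMarg p Y x y ∨ x = y

/-- Drop strategy on the conditionally lexicographic domain: `x ∉ ωi` becomes the worst,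
with preferences over bundles avoiding `x` unchanged. -/
def DropStrategyCL (ωi : Finset O) (p p' : Pref O) : Prop :=
  ∃ x : O, x ∉ ωi ∧
    (∀ Y : Finset O, Y.Nonempty → x ∉ Y → p'.strict Y {x}) ∧
    (∀ Y Z : Finset O, x ∉ Y → x ∉ Z → (p'.strict Y Z ↔ p.strict Y Z))

section Rules

variable [DecidableEq O]

/-- Balancedness of a rule on the domain `D`. -/
def RBAL (D : Pref O → Prop) (ω : Allocation N O)
    (φ : (N → Pref O) → Allocation N O) : Prop :=
  ∀ P : N → Pref O, (∀ i, D (P i)) → ∀ i, ((φ P).bundle i).card = (ω.bundle i).card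

/-- Individual-good efficiency of a rule on the domain `D`. -/
def RIGE (D : Pref O → Prop) (φ : (N → Pref O) → Allocation N O) : Prop :=
  ∀ P : N → Pref O, (∀ i, D (P i)) → IGEat P ((φ P).bundle)

/-- Pareto efficiency of a rule on the domain `D`. -/
def RPE (D : Pref O → Prop) (φ : (N → Pref O) → Allocation N O) : Prop :=
  ∀ P : N → Pref O, (∀ i, D (P i)) → ParetoEffAt P ((φ P).bundle)

/-- Individual rationality of a rule on the domain `D`. -/
def RIR (D : Pref O → Prop) (ω : Allocation N O)
    (φ : (N → Pref O) → Allocation N O) : Prop :=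
  ∀ P : N → Pref O, (∀ i, D (P i)) → ∀ i, (P i).weak ((φ P).bundle i) (ω.bundle i)

/-- The worst-endowment lower bound of a rule on the domain `D`: no agent receives an
object marginally worse than the marginally worst object of her endowment. -/
def RWELB (D : Pref O → Prop) (ω : Allocation N O)
    (φ : (N → Pref O) → Allocation N O) : Prop :=
  ∀ P : N → Pref O, (∀ i, D (P i)) → ∀ i, ∀ o ∈ (φ P).bundle i,
    ∀ w ∈ ω.bundle i, (∀ y ∈ ω.bundle i, (P i).weak {y} {w}) → (P i).weak {o} {w}

/-- Marginality of a rule on the domain `D`. -/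
def RMAR (D : Pref O → Prop) (φ : (N → Pref O) → Allocation N O) : Prop :=
  ∀ P P' : N → Pref O, (∀ i, D (P i)) → (∀ i, D (P' i)) →
    (∀ i, MargEq (P i) (P' i)) → ∀ i, (φ P).bundle i = (φ P').bundle i

variable [DecidableEq N]

/-- Truncation-proofness of a rule on the domain `D`. -/
def RTP (D : Pref O → Prop) (ω : Allocation N O)
    (φ : (N → Pref O) → Allocation N O) : Prop :=
  ∀ P : N → Pref O, (∀ i, D (P i)) → ∀ i : N, ∀ p' : Pref O, D p' →
    TruncationStrategy (ω.bundle i) (P i) p' →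
    (P i).weak ((φ P).bundle i) ((φ (Function.update P i p')).bundle i)

/-- Drop strategy-proofness of a rule on the domain `D`. -/
def RDSP (D : Pref O → Prop) (ω : Allocation N O)
    (φ : (N → Pref O) → Allocation N O) : Prop :=
  ∀ P : N → Pref O, (∀ i, D (P i)) → ∀ i : N, ∀ p' : Pref O, D p' →
    DropStrategy (ω.bundle i) (P i) p' →
    (P i).weak ((φ P).bundle i) ((φ (Function.update P i p')).bundle i)

/-- Subset-drop strategy-proofness of a rule on the domain `D`. -/
def RSDSP (D : Pref O → Prop) (ω : Allocation N O)
    (φ : (N → Pref O) → Allocation N O) : Prop :=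
  ∀ P : N → Pref O, (∀ i, D (P i)) → ∀ i : N, ∀ p' : Pref O, D p' →
    SubsetDropStrategy (ω.bundle i) (P i) p' →
    (P i).weak ((φ P).bundle i) ((φ (Function.update P i p')).bundle i)

/-- Worst-endowment lower bound on the conditionally lexicographic domain, formulated
with conditional marginal preferences. -/
def RWELBCL (D : Pref O → Prop) (ω : Allocation N O)
    (φ : (N → Pref O) → Allocation N O) : Prop :=
  ∀ P : N → Pref O, (∀ i, D (P i)) → ∀ i, ∀ o ∈ (φ P).bundle i,
    ∀ w ∈ ω.bundle i,
      (∀ y ∈ ω.bundle i, CMargWeak (P i) ((φ P).bundle i) y w) →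
      CMargWeak (P i) ((φ P).bundle i) o w

/-- Drop strategy-proofness on the conditionally lexicographic domain. -/
def RDSPCL (D : Pref O → Prop) (ω : Allocation N O)
    (φ : (N → Pref O) → Allocation N O) : Prop :=
  ∀ P : N → Pref O, (∀ i, D (P i)) → ∀ i : N, ∀ p' : Pref O, D p' →
    DropStrategyCL (ω.bundle i) (P i) p' →
    (P i).weak ((φ P).bundle i) ((φ (Function.update P i p')).bundle i)

end Rules

/-- Agent `i`'s opportunity set under TTC when reporting `p`: the set of bundles
she may receive as others' (responsive) reports vary. -/
def Opp [Fintype O] [Nonempty O] [DecidableEq O] (ω : Allocation N O) (i : N)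
    (p : Pref O) : Set (Finset O) :=
  {A | ∃ Q : N → Pref O, (∀ j, Responsive (Q j)) ∧ Q i = p ∧ TTC Q ω i = A}

theorem card_filter_insert_le_of_isUpperSet {O : Type*} [Preorder O] [DecidableEq O] {U : Set O}
    {X : Finset O} {y z : O} (hU : IsUpperSet U) (hy : y ∉ X) (hzy : z ≤ y) :
    ((insert z X).filter (· ∈ U)).card ≤ ((insert y X).filter (· ∈ U)).card := by
  by_cases hz : z ∈ U
  · rw [Finset.filter_insert, Finset.filter_insert, if_pos hz, if_pos (hU hzy hz),
      Finset.card_insert_of_notMem fun h ↦ hy (Finset.mem_of_mem_filter y h)]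
    exact Finset.card_insert_le _ _
  · rw [Finset.filter_insert, if_neg hz]
    exact Finset.card_le_card (Finset.filter_subset_filter _ (Finset.subset_insert y X))

/-- The key by which `Pref.countFirst U` ranks bundles: the number of objects in `U`, and then the
bundle itself in the colexicographic order. -/
noncomputable def countColex {O : Type*} (U : Set O) (X : Finset O) : ℕ ×ₗ Colex (Finset O) :=
  toLex ((X.filter (· ∈ U)).card, toColex X)

theorem countColex_injective {O : Type*} (U : Set O) : Function.Injective (countColex U) :=
  fun _ _ h ↦ toColex_inj.1 (congrArg (fun k ↦ (ofLex k).2) h)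

theorem strictMonoOn_countColex_insert {O : Type*} [LinearOrder O] [DecidableEq O] {U : Set O}
    (hU : IsUpperSet U) (X : Finset O) :
    StrictMonoOn (fun y ↦ countColex U (insert y X)) {y | y ∉ X} := fun _ hz _ hy hzy ↦
  Prod.Lex.toLex_lt_toLex'.2 ⟨card_filter_insert_le_of_isUpperSet hU hy hzy.le,
    fun _ ↦ (Finset.Colex.insert_lt_insert hz hy).2 hzy⟩

section CountFirst

variable {O : Type} [LinearOrder O] {U : Set O} {X Y : Finset O} {x y z : O}

/-- The preference that counts the objects in `U` and breaks ties colexicographically. Larger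
objects of the linear order on `O` are better. -/
def Pref.countFirst (U : Set O) : Pref O where
  strict X Y := countColex U Y < countColex U X
  total X Y := by
    rcases lt_trichotomy (countColex U Y) (countColex U X) with h | h | h
    · exact Or.inl h
    · exact Or.inr (Or.inl (countColex_injective U h.symm))
    · exact Or.inr (Or.inr h)
  irrefl _ := lt_irrefl _
  trans _ _ _ hXY hYZ := hYZ.trans hXY

theorem Pref.card_filter_le_of_countFirst_weak (h : (countFirst U).weak X Y) :
    (Y.filter (· ∈ U)).card ≤ (X.filter (· ∈ U)).card := by
  rcases h with h | rfl
  · exact Prod.Lex.monotone_fst _ _ (le_of_lt h)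
  · exact le_rfl

theorem Pref.countFirst_strict_insert_iff [DecidableEq O] (hU : IsUpperSet U) (hy : y ∉ X)
    (hz : z ∉ X) : (countFirst U).strict (insert y X) (insert z X) ↔ z < y :=
  (strictMonoOn_countColex_insert hU X).lt_iff_lt hz hy

theorem Pref.countFirst_strict_singleton_iff (hU : IsUpperSet U) :
    (countFirst U).strict {x} {y} ↔ y < x :=
  countFirst_strict_insert_iff hU (Finset.notMem_empty x) (Finset.notMem_empty y)

theorem Pref.responsive_countFirst [DecidableEq O] (hU : IsUpperSet U) :
    Responsive (countFirst U) :=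
  fun _ _ _ hy hz ↦
    (countFirst_strict_insert_iff hU hy hz).trans (countFirst_strict_singleton_iff hU).symm

end CountFirst

section Marginal

variable {O : Type} {p : Pref O} {X Y Z : Finset O}

theorem Pref.weak_trans (hXY : p.weak X Y) (hYZ : p.weak Y Z) : p.weak X Z := by
  rcases hXY with hXY | rfl
  · rcases hYZ with hYZ | rfl
    · exact Or.inl (p.trans X Y Z hXY hYZ)
    · exact Or.inl hXY
  · exact hYZ

theorem Pref.not_weak_iff_strict : ¬ p.weak Y X ↔ p.strict X Y := by
  refine ⟨fun h ↦ ?_, ?_⟩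
  · rcases p.total X Y with hXY | rfl | hYX
    · exact hXY
    · exact absurd (Or.inr rfl) h
    · exact absurd (Or.inl hYX) h
  · rintro hXY (hYX | rfl)
    · exact p.irrefl X (p.trans X Y X hXY hYX)
    · exact p.irrefl Y hXY

/-- The marginal preference of `p`, as a linear order on objects in which better is larger. -/
noncomputable abbrev Pref.marginalOrder (p : Pref O) : LinearOrder O where
  le x y := p.weak {y} {x}
  lt x y := p.strict {y} {x}
  le_refl _ := Or.inr rfl
  le_trans _ _ _ hxy hyz := weak_trans hyz hxy
  lt_iff_le_not_ge _ _ :=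
    ⟨fun h ↦ ⟨Or.inl h, not_weak_iff_strict.2 h⟩, fun h ↦ not_weak_iff_strict.1 h.2⟩
  le_antisymm _ _ hxy hyx :=
    Finset.singleton_injective (hyx.resolve_left fun h ↦ not_weak_iff_strict.2 h hxy)
  le_total _ _ := or_iff_not_imp_left.2 fun h ↦ Or.inl (not_weak_iff_strict.1 h)
  toDecidableLE := Classical.decRel _

/-- `U` is an upper set of the marginal preference of `p`: it contains every object marginally at
least as good as one of its members. -/
def Pref.IsMarginalUpperSet (p : Pref O) (U : Set O) : Prop :=
  ∀ ⦃x y : O⦄, p.weak {x} {y} → y ∈ U → x ∈ U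

theorem Pref.isMarginalUpperSet_univ (p : Pref O) : p.IsMarginalUpperSet Set.univ :=
  fun _ _ _ _ ↦ Set.mem_univ _

theorem Pref.isMarginalUpperSet_setOf_weak (p : Pref O) (w : O) :
    p.IsMarginalUpperSet {x | p.weak {x} {w}} :=
  fun _ _ ↦ weak_trans

theorem Pref.IsMarginalUpperSet.exists_responsive_margEq [DecidableEq O] {U : Set O}
    (hU : p.IsMarginalUpperSet U) :
    ∃ q : Pref O, Responsive q ∧ MargEq p q ∧
      ∀ X Y, q.weak X Y → (Y.filter (· ∈ U)).card ≤ (X.filter (· ∈ U)).card := by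
  let := p.marginalOrder
  have hU' : IsUpperSet U := fun _ _ hxy hx ↦ hU hxy hx
  exact ⟨countFirst U, responsive_countFirst hU',
    fun _ _ ↦ (countFirst_strict_singleton_iff hU').symm,
    fun _ _ ↦ card_filter_le_of_countFirst_weak⟩

end Marginal

theorem Allocation.sum_card_bundle {N O : Type} [Fintype N] (μ : Allocation N O) :
    ∑ i, (μ.bundle i).card = Nat.card O := by
  have hdisj : ((Finset.univ : Finset N) : Set N).PairwiseDisjoint μ.bundle :=
    fun i _ j _ hij ↦ Finset.disjoint_left.2 (μ.disj i j hij)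
  have hcover : (Finset.univ.biUnion μ.bundle : Set O) = Set.univ :=
    Set.eq_univ_of_forall fun o ↦
      let ⟨i, hi⟩ := μ.cover o
      Finset.mem_biUnion.2 ⟨i, Finset.mem_univ i, hi⟩
  rw [← Finset.card_biUnion hdisj, ← Set.ncard_coe_finset, hcover, Set.ncard_univ]

section Rules

variable {N O : Type} {D : Pref O → Prop} {ω : Allocation N O}
  {φ : (N → Pref O) → Allocation N O} {P : N → Pref O}

theorem weak_endowment_of_margEq (hMAR : RMAR D φ) (hIR : RIR D ω φ) (hP : ∀ j, D (P j))
    {i : N} {q : Pref O} (hq : D q) (hPq : MargEq (P i) q) :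
    q.weak ((φ P).bundle i) (ω.bundle i) := by
  have hD : ∀ j, D (Function.update P i q j) :=
    (Function.forall_update_iff P fun _ ↦ D).2 ⟨hq, fun j _ ↦ hP j⟩
  have hmarg : ∀ j, MargEq (P j) (Function.update P i q j) :=
    (Function.forall_update_iff P fun j ↦ MargEq (P j)).2 ⟨hPq, fun _ _ _ _ ↦ Iff.rfl⟩
  have hweak := hIR _ hD i
  rwa [← hMAR P _ hP hD hmarg i, Function.update_self] at hweak

variable [DecidableEq O]

theorem card_filter_endowment_le (hMAR : RMAR Responsive φ) (hIR : RIR Responsive ω φ)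
    (hP : ∀ j, Responsive (P j)) {i : N} {U : Set O} (hU : (P i).IsMarginalUpperSet U) :
    ((ω.bundle i).filter (· ∈ U)).card ≤ (((φ P).bundle i).filter (· ∈ U)).card := by
  obtain ⟨q, hq, hPq, hcard⟩ := hU.exists_responsive_margEq
  exact hcard _ _ (weak_endowment_of_margEq hMAR hIR hP hq hPq)

theorem rbal_of_rmar_of_rir [Finite N] (hMAR : RMAR Responsive φ) (hIR : RIR Responsive ω φ) :
    RBAL Responsive ω φ := by
  cases nonempty_fintype N
  intro P hP i
  have hle : ∀ j ∈ Finset.univ, (ω.bundle j).card ≤ ((φ P).bundle j).card := fun j _ ↦ by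
    simpa only [Set.mem_univ, Finset.filter_true] using
      card_filter_endowment_le hMAR hIR hP (P j).isMarginalUpperSet_univ
  have hsum : ∑ j, (ω.bundle j).card = ∑ j, ((φ P).bundle j).card :=
    ω.sum_card_bundle.trans (φ P).sum_card_bundle.symm
  exact ((Finset.sum_eq_sum_iff_of_le hle).1 hsum i (Finset.mem_univ i)).symm

theorem rwelb_of_rmar_of_rir_of_rbal (hMAR : RMAR Responsive φ) (hIR : RIR Responsive ω φ)
    (hBAL : RBAL Responsive ω φ) : RWELB Responsive ω φ := by
  intro P hP i o ho w _ hworst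
  have hcard := card_filter_endowment_le hMAR hIR hP ((P i).isMarginalUpperSet_setOf_weak w)
  have hω : (ω.bundle i).filter (· ∈ {x | (P i).weak {x} {w}}) = ω.bundle i :=
    Finset.filter_true_of_mem hworst
  rw [hω, ← hBAL P hP i] at hcard
  exact Finset.card_filter_eq_iff.1 ((Finset.card_filter_le _ _).antisymm hcard) o ho

end Rules

/-- On the responsive domain, every marginal rule satisfying IR
also satisfies BAL and WELB. -/
theorem stmt0 {N O : Type} [Fintype N] [Fintype O] [DecidableEq N] [DecidableEq O]
    (hN : 2 ≤ Fintype.card N) (hNO : Fintype.card N ≤ Fintype.card O)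
    (ω : Allocation N O) (φ : (N → Pref O) → Allocation N O)
    (hMAR : RMAR Responsive φ) (hIR : RIR Responsive ω φ) :
    RBAL Responsive ω φ ∧ RWELB Responsive ω φ :=
  have hBAL := rbal_of_rmar_of_rir hMAR hIR
  ⟨hBAL, rwelb_of_rmar_of_rir_of_rbal hMAR hIR hBAL⟩

end Realloc
end

section
/- On the lexicographic domain ℒ, a rule satisfies balancedness (BAL), individual-good efficiency (IGE), the worst-endowment lower bound (WELB), and truncation-proofness (TP) if and only if it equals the generalized Top Trading Cycles rule TTC. -/
attribute [local instance] Classical.propDecidable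

namespace Realloc

variable {N O : Type}

/-! TTC matches each object with the one its owner receives for it. This matching is a bijection
that never makes an owner worse off, which gives BAL and WELB. Objects that an agent prefers to
one she receives are traded in earlier rounds, which gives IGE. A truncation leaves the rounds
unchanged until the best remaining object is truncated, and from then on the agent keeps her
remaining endowment, which a lexicographic agent cannot prefer; this gives TP.

Conversely, call an object outside an agent's endowment attractive if she prefers it to some
object of her endowment. For a rule satisfying the axioms, show by induction on the set of
attractive pairs and then on the rounds that every agent receives what TTC assigns to her. Suppose
that in some round the owner of a traded object does not receive the object `b` she points to.
Truncating at an attractive object below `b` removes attractive pairs, so the rule then agrees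
with TTC and gives her `b`, against TP. So no remaining object that she receives is attractive: by
WELB these all come from her endowment, and by BAL they exhaust what remains of it. Hence the
objects whose owners miss the object they point to are kept by these owners and form trading
cycles that IGE rules out. -/

namespace Pref

variable (p : Pref O)

lemma asymm {X Y : Finset O} (h : p.strict X Y) : ¬ p.strict Y X :=
  fun h' => p.irrefl _ (p.trans _ _ _ h h')

lemma weak_refl (X : Finset O) : p.weak X X := Or.inr rfl

lemma strict_of_weak_of_strict {X Y Z : Finset O} (h : p.weak X Y) (h' : p.strict Y Z) :
    p.strict X Z := by
  rcases h with h | rfl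
  exacts [p.trans _ _ _ h h', h']

lemma weak_trans_s1 {X Y Z : Finset O} (h : p.weak X Y) (h' : p.weak Y Z) : p.weak X Z := by
  rcases h' with h' | rfl
  exacts [Or.inl (p.strict_of_weak_of_strict h h'), h]

lemma not_strict_iff_weak {X Y : Finset O} : ¬ p.strict X Y ↔ p.weak Y X := by
  refine ⟨fun h => ?_, ?_⟩
  · rcases p.total X Y with h' | h' | h'
    exacts [absurd h' h, Or.inr h'.symm, Or.inl h']
  · rintro (h | rfl)
    exacts [p.asymm h, p.irrefl _]

lemma strict_of_weak_of_ne {x y : O} (h : p.weak {x} {y}) (hne : x ≠ y) : p.strict {x} {y} :=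
  h.resolve_right fun h' => hne (Finset.singleton_injective h')

/-- The marginal ranking of the objects as a linear order in which better objects are larger. -/
noncomputable abbrev marginalOrder_s1 : LinearOrder O :=
  letI : IsStrictTotalOrder O fun x y => p.strict {y} {x} :=
    { trichotomous := fun _ _ h h' => Finset.singleton_injective <| by
        rcases p.total _ _ with h'' | h'' | h''
        exacts [absurd h'' h', h'', absurd h'' h]
      irrefl := fun _ => p.irrefl _
      trans := fun _ _ _ h h' => p.trans _ _ _ h' h }
  linearOrderOfSTO fun x y => p.strict {y} {x}

lemma exists_best {S : Finset O} (hS : S.Nonempty) : ∃ x ∈ S, ∀ y ∈ S, p.weak {x} {y} := by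
  let _ := p.marginalOrder_s1
  obtain ⟨x, hx, hmax⟩ := S.exists_max_image id hS
  exact ⟨x, hx, fun y hy => p.not_strict_iff_weak.1 (not_lt.2 (hmax y hy))⟩

lemma exists_worst {S : Finset O} (hS : S.Nonempty) : ∃ x ∈ S, ∀ y ∈ S, p.weak {y} {x} := by
  let _ := p.marginalOrder_s1
  obtain ⟨x, hx, hmin⟩ := S.exists_min_image id hS
  exact ⟨x, hx, fun y hy => p.not_strict_iff_weak.1 (not_lt.2 (hmin y hy))⟩

section Best

variable [Nonempty O] {S : Finset O}

lemma best_mem (hS : S.Nonempty) : p.best S ∈ S := by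
  rw [best, dif_pos (p.exists_best hS)]
  exact (p.exists_best hS).choose_spec.1

lemma best_weak {y : O} (hy : y ∈ S) : p.weak {p.best S} {y} := by
  rw [best, dif_pos (p.exists_best ⟨y, hy⟩)]
  exact (p.exists_best ⟨y, hy⟩).choose_spec.2 y hy

lemma best_eq_of_forall_weak {x : O} (hx : x ∈ S) (h : ∀ y ∈ S, p.weak {x} {y}) :
    p.best S = x := by
  by_contra hne
  exact p.asymm (p.strict_of_weak_of_ne (p.best_weak hx) hne)
    (p.strict_of_weak_of_ne (h _ (p.best_mem ⟨x, hx⟩)) (Ne.symm hne))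

end Best

end Pref

lemma exists_best_symmDiff_iff [DecidableEq O] (p : Pref O) (X Y : Finset O) :
    (∃ x ∈ X \ Y, ∀ y ∈ (X \ Y) ∪ (Y \ X), y ≠ x → p.strict {x} {y}) ↔
      ∃ x ∈ X, x ∉ Y ∧ ∀ y ∈ Y, y ∉ X → p.strict {x} {y} := by
  constructor
  · rintro ⟨x, hx, hbest⟩
    obtain ⟨hxX, hxY⟩ := Finset.mem_sdiff.1 hx
    refine ⟨x, hxX, hxY, fun y hyY hyX => hbest y ?_ (ne_of_mem_of_not_mem hyY hxY)⟩
    exact Finset.mem_union_right _ (Finset.mem_sdiff.2 ⟨hyY, hyX⟩)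
  · rintro ⟨x, hxX, hxY, hx⟩
    have hxXY : x ∈ X \ Y := Finset.mem_sdiff.2 ⟨hxX, hxY⟩
    obtain ⟨b, hb, hbest⟩ := p.exists_best ⟨x, hxXY⟩
    refine ⟨b, hb, fun y hy hyb => ?_⟩
    rcases Finset.mem_union.1 hy with hy | hy
    · exact p.strict_of_weak_of_ne (hbest y hy) hyb.symm
    · obtain ⟨hyY, hyX⟩ := Finset.mem_sdiff.1 hy
      exact p.strict_of_weak_of_strict (hbest x hxXY) (hx y hyY hyX)

-- Only the objects of `Y \ X` have to be compared with the witness, and `X = Y` needs no exception.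
lemma lexicographic_iff [DecidableEq O] {p : Pref O} :
    Lexicographic p ↔
      ∀ X Y, p.strict X Y ↔ ∃ x ∈ X, x ∉ Y ∧ ∀ y ∈ Y, y ∉ X → p.strict {x} {y} := by
  simp only [Lexicographic, exists_best_symmDiff_iff]
  refine ⟨fun hp X Y => ?_, fun hp X Y _ => hp X Y⟩
  rcases eq_or_ne X Y with rfl | hXY
  · exact iff_of_false (p.irrefl X) fun ⟨_, hx, hx', _⟩ => hx' hx
  · exact hp X Y hXY

namespace Lexicographic

variable [DecidableEq O] {p : Pref O} (hp : Lexicographic p)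
include hp

lemma strict_iff {X Y : Finset O} :
    p.strict X Y ↔ ∃ x ∈ X, x ∉ Y ∧ ∀ y ∈ Y, y ∉ X → p.strict {x} {y} :=
  lexicographic_iff.1 hp X Y

lemma strict_insert_erase_iff {X : Finset O} {a o : O} (ho : o ∈ X) :
    p.strict ((insert a X).erase o) X ↔ a ∉ X ∧ p.strict {a} {o} := by
  rw [hp.strict_iff]
  constructor
  · rintro ⟨x, hx, hxX, hlt⟩
    obtain rfl : x = a :=
      (Finset.mem_insert.1 (Finset.mem_of_mem_erase hx)).resolve_right hxX
    exact ⟨hxX, hlt o ho (Finset.notMem_erase _ _)⟩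
  · rintro ⟨ha, hao⟩
    refine ⟨a, ?_, ha, fun y hy hy' => ?_⟩
    · exact Finset.mem_erase.2 ⟨(ne_of_mem_of_not_mem ho ha).symm, Finset.mem_insert_self _ _⟩
    · obtain rfl : y = o := by
        by_contra hyo
        exact hy' (Finset.mem_erase.2 ⟨hyo, Finset.mem_insert_of_mem hy⟩)
      exact hao

lemma weak_union_left {X Y Z : Finset O} (hZX : Disjoint Z X) (h : p.weak X Y) :
    p.weak (Z ∪ X) (Z ∪ Y) := by
  rcases h with h | rfl
  · obtain ⟨x, hxX, hxY, hlt⟩ := hp.strict_iff.1 h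
    have hxZ : x ∉ Z := Finset.disjoint_right.1 hZX hxX
    refine Or.inl (hp.strict_iff.2 ⟨x, Finset.mem_union_right _ hxX, by simp [hxZ, hxY], ?_⟩)
    intro y hy hy'
    simp only [Finset.mem_union, not_or] at hy hy'
    exact hlt y (hy.resolve_left hy'.1) hy'.2
  · exact p.weak_refl _

/-- If `X` beat its image, the best object `x` lost would be missing from the image, so `e` would
inject the objects of `X` weakly above `x` into those strictly above `x`. -/
lemma weak_image {X : Finset O} {e : O → O} (he : Set.InjOn e X)
    (hweak : ∀ x ∈ X, p.weak {e x} {x}) : p.weak (X.image e) X := by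
  rw [← p.not_strict_iff_weak, hp.strict_iff]
  rintro ⟨x, hxX, hxe, hlt⟩
  let U := X.filter fun y => p.weak {y} {x}
  have hxU : x ∈ U := Finset.mem_filter.2 ⟨hxX, p.weak_refl _⟩
  have hmaps : Set.MapsTo e U (U.erase x) := by
    intro y hy
    obtain ⟨hyX, hyx⟩ := Finset.mem_filter.1 hy
    have heyx : p.weak {e y} {x} := p.weak_trans_s1 (hweak y hyX) hyx
    have hey : e y ∈ X.image e := Finset.mem_image_of_mem e hyX
    have heyX : e y ∈ X := by
      by_contra heyX
      exact p.not_strict_iff_weak.2 heyx (hlt _ hey heyX)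
    exact Finset.mem_erase.2
      ⟨ne_of_mem_of_not_mem hey hxe, Finset.mem_filter.2 ⟨heyX, heyx⟩⟩
  have hle : U.card ≤ (U.erase x).card :=
    Finset.card_le_card_of_injOn e hmaps (he.mono (Finset.filter_subset _ _))
  exact (Finset.card_erase_lt_of_mem hxU).not_ge hle

end Lexicographic

/-- The lexicographic preference that ranks the objects by `key`, larger keys being better. Bundles
are compared by `Colex`, since there the largest key of the symmetric difference decides. -/
def lexPref {α : Type*} [LinearOrder α] (key : O ↪ α) : Pref O where
  strict X Y := toColex (Y.map key) < toColex (X.map key)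
  total X Y := by
    rcases lt_trichotomy (toColex (Y.map key)) (toColex (X.map key)) with h | h | h
    · exact Or.inl h
    · exact Or.inr (Or.inl (Finset.map_injective key (toColex.injective h)).symm)
    · exact Or.inr (Or.inr h)
  irrefl _ := lt_irrefl _
  trans _ _ _ h h' := h'.trans h

section LexPref

variable {α : Type*} [LinearOrder α] (key : O ↪ α)

lemma lexPref_strict_singleton {x y : O} : (lexPref key).strict {x} {y} ↔ key y < key x := by
  simp only [lexPref, Finset.map_singleton, Finset.Colex.singleton_lt_singleton]

lemma lexPref_lexicographic [DecidableEq O] : Lexicographic (lexPref key) := by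
  refine lexicographic_iff.2 fun X Y => ?_
  simp only [lexPref_strict_singleton]
  simp only [lexPref, Finset.Colex.toColex_lt_toColex_iff_exists_forall_lt, Finset.mem_map,
    exists_exists_and_eq_and, forall_exists_index, and_imp, forall_apply_eq_imp_iff₂,
    key.injective.eq_iff, exists_eq_right]

end LexPref

/-- The marginal ranking of `q` arises from that of `p` by moving the objects of `X` to the bottom,
without reordering them or the other objects. -/
structure Demotes (p q : Pref O) (X : Set O) : Prop where
  strict_iff_of_mem : ∀ u v, u ∈ X → v ∈ X → (p.strict {u} {v} ↔ q.strict {u} {v})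
  strict_iff_of_notMem : ∀ u v, u ∉ X → v ∉ X → (p.strict {u} {v} ↔ q.strict {u} {v})
  strict_of_notMem_of_mem : ∀ u v, u ∈ X → v ∉ X → q.strict {v} {u}

/-- The set of objects that the truncation of `p` at `x` moves to the bottom. -/
def truncatedSet (ωi : Finset O) (p : Pref O) (x : O) : Set O :=
  {u | u ∉ ωi ∧ p.weak {x} {u}}

lemma truncationStrategy_iff {ωi : Finset O} {p q : Pref O} :
    TruncationStrategy ωi p q ↔ ∃ x, Demotes p q (truncatedSet ωi p x) :=
  exists_congr fun _ => ⟨fun ⟨h₁, h₂, h₃⟩ => ⟨h₁, h₂, h₃⟩, fun ⟨h₁, h₂, h₃⟩ => ⟨h₁, h₂, h₃⟩⟩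

lemma exists_lexicographic_demotes [DecidableEq O] (p : Pref O) (X : Set O) :
    ∃ q, Lexicographic q ∧ Demotes p q X := by
  let _ := p.marginalOrder_s1
  have strict_iff_lt (u v : O) : p.strict {u} {v} ↔ v < u := Iff.rfl
  let key : O ↪ Bool ×ₗ O :=
    ⟨fun o => toLex (decide (o ∉ X), o), fun u v h => congrArg (fun k => (ofLex k).2) h⟩
  refine ⟨lexPref key, lexPref_lexicographic key, ?_, ?_, ?_⟩ <;> intro u v hu hv <;>
    simp [strict_iff_lt, lexPref_strict_singleton, key, Prod.Lex.toLex_lt_toLex, hu, hv]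

lemma Demotes.best_eq [Nonempty O] {p q : Pref O} {X : Set O} (h : Demotes p q X) {S : Finset O}
    (hS : S.Nonempty) (hbest : p.best S ∉ X) : q.best S = p.best S := by
  refine q.best_eq_of_forall_weak (p.best_mem hS) fun y hy => ?_
  by_cases hyX : y ∈ X
  · exact Or.inl (h.strict_of_notMem_of_mem _ _ hyX hbest)
  · exact (p.best_weak hy).imp (h.strict_iff_of_notMem _ _ hbest hyX).1 id

section Cycles

variable {α : Type*} {V : Set α} {g : α → α}

lemma exists_mem_periodicPts (hV : V.Finite) (hne : V.Nonempty) (hg : Set.MapsTo g V V) :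
    ∃ x ∈ V, x ∈ Function.periodicPts g := by
  obtain ⟨a, ha⟩ := hne
  have hmem (n : ℕ) : g^[n] a ∈ V := hg.iterate n ha
  obtain ⟨m, n, hmn, heq⟩ := hV.exists_lt_map_eq_of_forall_mem hmem
  refine ⟨g^[m] a, hmem m, Function.mk_mem_periodicPts (Nat.sub_pos_of_lt hmn) ?_⟩
  rw [Function.IsPeriodicPt, Function.IsFixedPt, ← Function.iterate_add_apply,
    Nat.sub_add_cancel hmn.le, heq]

lemma exists_fin_cycle (hV : V.Finite) (hne : V.Nonempty) (hg : Set.MapsTo g V V) :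
    ∃ (k : ℕ) (c : Fin (k + 1) → α),
      Function.Injective c ∧ (∀ ℓ, c ℓ ∈ V) ∧ ∀ ℓ, c (ℓ + 1) = g (c ℓ) := by
  obtain ⟨x, hxV, hx⟩ := exists_mem_periodicPts hV hne hg
  obtain ⟨k, hk⟩ : ∃ k, Function.minimalPeriod g x = k + 1 :=
    Nat.exists_eq_succ_of_ne_zero (Function.minimalPeriod_pos_of_mem_periodicPts hx).ne'
  have hlt (ℓ : Fin (k + 1)) : (ℓ : ℕ) ∈ Set.Iio (Function.minimalPeriod g x) := by
    simp only [hk, Set.mem_Iio, ℓ.isLt]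
  refine ⟨k, fun ℓ => g^[ℓ] x, fun ℓ m h => Fin.ext ?_, fun ℓ => hg.iterate ℓ hxV, fun ℓ => ?_⟩
  · exact Function.iterate_injOn_Iio_minimalPeriod (hlt ℓ) (hlt m) h
  · dsimp only
    rw [← Function.iterate_succ_apply' g, ← Function.iterate_mod_minimalPeriod_eq (n := _ + 1), hk,
      Fin.val_add, Fin.val_one', Nat.add_mod_mod]

end Cycles

section Rounds

variable {pref pref' : N → Pref O} {own : O → N} {S : Finset O} {i : N} {o : O}

/-- The objects of `S` endowed to agent `i`. -/
noncomputable def ownedIn (own : O → N) (S : Finset O) (i : N) : Finset O :=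
  S.filter fun o => own o = i

lemma mem_ownedIn : o ∈ ownedIn own S i ↔ o ∈ S ∧ own o = i := Finset.mem_filter

lemma ownedIn_union [DecidableEq O] (S T : Finset O) :
    ownedIn own (S ∪ T) i = ownedIn own S i ∪ ownedIn own T i :=
  Finset.filter_union _ _ _

variable [Nonempty O]

/-- The object that the owner of `o` points to when the objects of `S` remain. -/
noncomputable def pointsTo (pref : N → Pref O) (own : O → N) (S : Finset O) (o : O) : O :=
  (pref (own o)).best S

/-- The objects of `S` that are traded when the objects of `S` remain, that is, those lying on a
cycle of `pointsTo`. -/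
noncomputable def tradedObjects (pref : N → Pref O) (own : O → N) (S : Finset O) : Finset O :=
  S.filter fun o => ∃ k : ℕ, 0 < k ∧ (pointsTo pref own S)^[k] o = o

lemma pointsTo_mem (hS : S.Nonempty) (o : O) : pointsTo pref own S o ∈ S := Pref.best_mem _ hS

lemma pointsTo_weak (ho : o ∈ S) : (pref (own o)).weak {pointsTo pref own S o} {o} :=
  Pref.best_weak _ ho

lemma tradedObjects_subset : tradedObjects pref own S ⊆ S := Finset.filter_subset _ _

lemma coe_tradedObjects (hS : S.Nonempty) :
    (tradedObjects pref own S : Set O) = Function.periodicPts (pointsTo pref own S) := by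
  ext o
  refine ⟨fun ho => (Finset.mem_filter.1 ho).2, fun ⟨k, hk, ho⟩ => ?_⟩
  have hoS : o ∈ S := by
    obtain ⟨n, rfl⟩ := Nat.exists_eq_succ_of_ne_zero hk.ne'
    rw [← ho.eq, Function.iterate_succ_apply']
    exact pointsTo_mem hS _
  exact Finset.mem_filter.2 ⟨hoS, k, hk, ho⟩

lemma bijOn_pointsTo_tradedObjects :
    Set.BijOn (pointsTo pref own S) (tradedObjects pref own S) (tradedObjects pref own S) := by
  rcases S.eq_empty_or_nonempty with rfl | hS
  · simp [tradedObjects]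
  · rw [coe_tradedObjects hS]
    exact Function.bijOn_periodicPts _

lemma tradedObjects_nonempty (hS : S.Nonempty) : (tradedObjects pref own S).Nonempty := by
  obtain ⟨o, -, ho⟩ := exists_mem_periodicPts (g := pointsTo pref own S) S.finite_toSet hS
    fun o _ => pointsTo_mem hS o
  rw [← coe_tradedObjects hS] at ho
  exact ⟨o, ho⟩

section Congr

variable (h : ∀ j, (pref j).best S = (pref' j).best S)
include h

lemma pointsTo_congr : pointsTo pref own S = pointsTo pref' own S := funext fun _ => h _

lemma tradedObjects_congr : tradedObjects pref own S = tradedObjects pref' own S := by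
  rw [tradedObjects, pointsTo_congr h, tradedObjects]

end Congr

variable [DecidableEq O]

/-- The objects that agent `i` receives in a round starting with the objects of `S`. -/
noncomputable def roundBundle (pref : N → Pref O) (own : O → N) (S : Finset O) (i : N) :
    Finset O :=
  (ownedIn own (tradedObjects pref own S) i).image (pointsTo pref own S)

/-- The objects left when the algorithm, started from `S`, has run for `t` rounds. -/
noncomputable def remaining (pref : N → Pref O) (own : O → N) (t : ℕ) (S : Finset O) : Finset O :=
  (fun T => T \ tradedObjects pref own T)^[t] S

lemma remaining_succ (t : ℕ) : remaining pref own (t + 1) S =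
    remaining pref own t S \ tradedObjects pref own (remaining pref own t S) :=
  Function.iterate_succ_apply' _ _ _

lemma remaining_antitone : Antitone fun t => remaining pref own t S :=
  antitone_nat_of_succ_le fun t => by
    rw [remaining_succ]
    exact Finset.sdiff_subset

lemma card_sdiff_tradedObjects_le {t : ℕ} (h : S.card ≤ t + 1) :
    (S \ tradedObjects pref own S).card ≤ t := by
  rcases S.eq_empty_or_nonempty with rfl | hS
  · simp
  · exact Nat.le_of_lt_succ <| h.trans_lt' <| Finset.card_lt_card <|
      Finset.sdiff_ssubset tradedObjects_subset (tradedObjects_nonempty hS)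

lemma remaining_eq_empty {t : ℕ} (h : S.card ≤ t) : remaining pref own t S = ∅ := by
  induction t generalizing S with
  | zero => exact Finset.card_eq_zero.1 (Nat.le_zero.1 h)
  | succ t ih => exact ih (card_sdiff_tradedObjects_le h)

lemma TTCaux_succ (t : ℕ) : TTCaux pref own (t + 1) S i =
    roundBundle pref own S i ∪ TTCaux pref own t (S \ tradedObjects pref own S) i := by
  rcases S.eq_empty_or_nonempty with rfl | hS
  · cases t <;> simp [TTCaux, roundBundle, tradedObjects, ownedIn]
  · exact if_pos hS

lemma TTCaux_succ' (t : ℕ) : TTCaux pref own (t + 1) S i =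
    TTCaux pref own t S i ∪ roundBundle pref own (remaining pref own t S) i := by
  induction t generalizing S with
  | zero => rw [TTCaux_succ, Finset.union_comm]; rfl
  | succ t ih => rw [TTCaux_succ, ih, TTCaux_succ, Finset.union_assoc]; rfl

lemma TTCaux_mono : Monotone fun t => TTCaux pref own t S i :=
  monotone_nat_of_le_succ fun t => by
    rw [TTCaux_succ']
    exact Finset.subset_union_left

/-- The object that the owner of `o` receives in exchange for it when the algorithm is run for
`t` rounds from `S`, and `o` itself if it is not traded by then. -/
noncomputable def exchange (pref : N → Pref O) (own : O → N) : ℕ → Finset O → O → O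
  | 0, _, o => o
  | t + 1, S, o =>
      if o ∈ tradedObjects pref own S then pointsTo pref own S o
      else exchange pref own t (S \ tradedObjects pref own S) o

lemma sdiff_remaining_succ (t : ℕ) : S \ remaining pref own (t + 1) S =
    tradedObjects pref own S ∪ (S \ tradedObjects pref own S) \
      remaining pref own t (S \ tradedObjects pref own S) := by
  set R := remaining pref own t (S \ tradedObjects pref own S)
  have hle : R ⊆ S \ tradedObjects pref own S := remaining_antitone t.zero_le
  have htraded : tradedObjects pref own S ⊆ S := tradedObjects_subset
  change S \ R = _
  grind

lemma exchange_eqOn_tradedObjects (t : ℕ) :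
    Set.EqOn (exchange pref own (t + 1) S) (pointsTo pref own S) (tradedObjects pref own S) :=
  fun _ ho => if_pos ho

lemma exchange_eqOn_sdiff (t : ℕ) (R : Finset O) : Set.EqOn (exchange pref own (t + 1) S)
    (exchange pref own t (S \ tradedObjects pref own S))
    ((S \ tradedObjects pref own S) \ R : Finset O) :=
  fun _ ho => if_neg (Finset.mem_sdiff.1 (Finset.mem_sdiff.1 ho).1).2

lemma bijOn_exchange (t : ℕ) : Set.BijOn (exchange pref own t S)
    (S \ remaining pref own t S : Finset O) (S \ remaining pref own t S : Finset O) := by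
  induction t generalizing S with
  | zero => simp [remaining]
  | succ t ih =>
    have htraded := bijOn_pointsTo_tradedObjects.congr
      (exchange_eqOn_tradedObjects (pref := pref) (own := own) (S := S) t).symm
    have hrest := (ih (S := S \ tradedObjects pref own S)).congr (exchange_eqOn_sdiff t _).symm
    have hdisj : Disjoint (tradedObjects pref own S : Set O)
        ((S \ tradedObjects pref own S) \ remaining pref own t (S \ tradedObjects pref own S) :
          Finset O) :=
      Finset.disjoint_coe.2 (Finset.disjoint_sdiff.mono_right Finset.sdiff_subset)
    rw [sdiff_remaining_succ, Finset.coe_union]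
    refine htraded.union hrest ((Set.injOn_union hdisj).2 ⟨htraded.injOn, hrest.injOn, ?_⟩)
    exact fun a ha b hb => hdisj.ne_of_mem (htraded.mapsTo ha) (hrest.mapsTo hb)

lemma exchange_weak (t : ℕ) (ho : o ∈ S) :
    (pref (own o)).weak {exchange pref own t S o} {o} := by
  induction t generalizing S with
  | zero => exact Pref.weak_refl _ _
  | succ t ih =>
    rw [exchange]
    split_ifs with hot
    · exact pointsTo_weak ho
    · exact ih (Finset.mem_sdiff.2 ⟨ho, hot⟩)

lemma TTCaux_eq_image (t : ℕ) : TTCaux pref own t S i =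
    (ownedIn own (S \ remaining pref own t S) i).image (exchange pref own t S) := by
  induction t generalizing S with
  | zero => simp [TTCaux, remaining, ownedIn]
  | succ t ih =>
    rw [TTCaux_succ, ih, sdiff_remaining_succ, ownedIn_union, Finset.image_union]
    congr 1 <;> refine Finset.image_congr (Set.EqOn.symm ?_)
    · exact (exchange_eqOn_tradedObjects t).mono (Finset.filter_subset _ _)
    · exact (exchange_eqOn_sdiff t _).mono (Finset.filter_subset _ _)

lemma card_TTCaux (t : ℕ) : (TTCaux pref own t S i).card =
    (ownedIn own (S \ remaining pref own t S) i).card := by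
  rw [TTCaux_eq_image]
  exact Finset.card_image_of_injOn ((bijOn_exchange t).injOn.mono (Finset.filter_subset _ _))

lemma TTCaux_subset_sdiff (t : ℕ) : TTCaux pref own t S i ⊆ S \ remaining pref own t S := by
  rw [TTCaux_eq_image, Finset.image_subset_iff]
  exact fun o ho => (bijOn_exchange t).mapsTo (mem_ownedIn.1 ho).1

lemma TTCaux_subset (t : ℕ) : TTCaux pref own t S i ⊆ S :=
  (TTCaux_subset_sdiff t).trans Finset.sdiff_subset

lemma exists_mem_TTCaux {t : ℕ} (ho : o ∈ S) (hot : o ∉ remaining pref own t S) :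
    ∃ j, o ∈ TTCaux pref own t S j := by
  obtain ⟨a, ha, rfl⟩ :=
    (bijOn_exchange (pref := pref) (own := own) t).surjOn (Finset.mem_sdiff.2 ⟨ho, hot⟩)
  refine ⟨own a, ?_⟩
  rw [TTCaux_eq_image]
  exact Finset.mem_image_of_mem _ (mem_ownedIn.2 ⟨ha, rfl⟩)

lemma exists_weak_of_mem_TTCaux {t : ℕ} (ho : o ∈ TTCaux pref own t S i) :
    ∃ a ∈ ownedIn own S i, (pref i).weak {o} {a} := by
  rw [TTCaux_eq_image] at ho
  obtain ⟨a, ha, rfl⟩ := Finset.mem_image.1 ho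
  obtain ⟨haS, rfl⟩ := mem_ownedIn.1 ha
  have haS' : a ∈ S := (Finset.mem_sdiff.1 haS).1
  exact ⟨a, mem_ownedIn.2 ⟨haS', rfl⟩, exchange_weak t haS'⟩

lemma TTCaux_weak_ownedIn (hp : Lexicographic (pref i)) {t : ℕ} (h : S.card ≤ t) :
    (pref i).weak (TTCaux pref own t S i) (ownedIn own S i) := by
  have hinj := (bijOn_exchange (pref := pref) (own := own) (S := S) t).injOn
  rw [remaining_eq_empty h, Finset.sdiff_empty] at hinj
  rw [TTCaux_eq_image, remaining_eq_empty h, Finset.sdiff_empty]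
  refine hp.weak_image (hinj.mono (Finset.filter_subset _ _)) fun o ho => ?_
  obtain ⟨hoS, rfl⟩ := mem_ownedIn.1 ho
  exact exchange_weak t hoS

lemma TTCaux_eq_ownedIn {t : ℕ} (h : S.card ≤ t)
    (hown : ∀ u ∈ S, own u = i → ∀ v ∈ S, own v ≠ i → (pref i).strict {u} {v}) :
    TTCaux pref own t S i = ownedIn own S i := by
  refine Finset.eq_of_subset_of_card_le (fun o ho => ?_) ?_
  · obtain ⟨a, ha, hoa⟩ := exists_weak_of_mem_TTCaux ho
    obtain ⟨haS, hai⟩ := mem_ownedIn.1 ha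
    have hoS := TTCaux_subset t ho
    refine mem_ownedIn.2 ⟨hoS, by_contra fun hoi => ?_⟩
    exact (pref i).not_strict_iff_weak.2 hoa (hown a haS hai o hoS hoi)
  · rw [card_TTCaux, remaining_eq_empty h, Finset.sdiff_empty]

lemma roundBundle_subset : roundBundle pref own S i ⊆ tradedObjects pref own S :=
  Finset.image_subset_iff.2 fun _ ho =>
    bijOn_pointsTo_tradedObjects.mapsTo (mem_ownedIn.1 ho).1

lemma roundBundle_congr (h : ∀ j, (pref j).best S = (pref' j).best S) :
    roundBundle pref own S i = roundBundle pref' own S i := by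
  rw [roundBundle, pointsTo_congr h, tradedObjects_congr h, roundBundle]

lemma TTCaux_congr {t : ℕ} (h : ∀ s < t, ∀ j,
      (pref j).best (remaining pref own s S) = (pref' j).best (remaining pref own s S)) :
    TTCaux pref own t S i = TTCaux pref' own t S i := by
  induction t generalizing S with
  | zero => rfl
  | succ t ih =>
    have hS : ∀ j, (pref j).best S = (pref' j).best S := h 0 t.succ_pos
    rw [TTCaux_succ, TTCaux_succ, roundBundle_congr hS, ← tradedObjects_congr hS,
      ih fun s hs => h (s + 1) (Nat.succ_lt_succ hs)]

/-- The rank of an object is the round in which it is traded: an object that an agent prefers to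
one she receives was traded in an earlier round, or else she would have pointed to it. -/
lemma exists_rank_lt_of_strict (t : ℕ) : ∃ r : O → ℕ, ∀ i, ∀ o ∈ TTCaux pref own t S i,
    ∀ y ∈ S, (pref i).strict {y} {o} → r y < r o := by
  induction t generalizing S with
  | zero => exact ⟨0, fun _ _ ho => absurd ho (Finset.notMem_empty _)⟩
  | succ t ih =>
    obtain ⟨r, hr⟩ := ih (S := S \ tradedObjects pref own S)
    refine ⟨fun o => if o ∈ tradedObjects pref own S then 0 else r o + 1, fun i o ho y hy hyo => ?_⟩
    rw [TTCaux_succ, Finset.mem_union] at ho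
    rcases ho with ho | ho
    · obtain ⟨a, ha, rfl⟩ := Finset.mem_image.1 ho
      obtain ⟨-, rfl⟩ := mem_ownedIn.1 ha
      exact absurd hyo ((pref (own a)).not_strict_iff_weak.2 (Pref.best_weak _ hy))
    · have hot := (Finset.mem_sdiff.1 (TTCaux_subset t ho)).2
      by_cases hyt : y ∈ tradedObjects pref own S
      · simp only [hyt, hot, if_true, if_false, Nat.succ_pos]
      · simp only [hyt, hot, if_false, Nat.succ_lt_succ_iff]
        exact hr i o ho y (Finset.mem_sdiff.2 ⟨hy, hyt⟩) hyo

lemma IGEat_TTCaux (hpref : ∀ i, Lexicographic (pref i)) (t : ℕ) :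
    IGEat pref (TTCaux pref own t S) := by
  rintro ⟨k, obj, ag, -, -, hmem, hgain⟩
  obtain ⟨r, hr⟩ := exists_rank_lt_of_strict (pref := pref) (own := own) (S := S) t
  obtain ⟨ℓ, hℓ⟩ := Finite.exists_min fun ℓ => r (obj ℓ)
  have hstrict := (((hpref (ag ℓ)).strict_insert_erase_iff (hmem ℓ)).1 (hgain ℓ)).2
  exact (hℓ (ℓ + 1)).not_gt
    (hr _ _ (hmem ℓ) _ (TTCaux_subset t (hmem (ℓ + 1))) hstrict)

/-- As long as the best remaining object `b` is not in `X`, the report `q` does not change the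
round. Once `b ∈ X`, reporting `q` makes agent `i` keep what is left of her endowment. -/
lemma TTCaux_weak_update [DecidableEq N] (hp : Lexicographic (pref i)) {q : Pref O} {X : Set O}
    (hq : Demotes (pref i) q X) (hXi : ∀ u ∈ X, own u ≠ i)
    (hX : ∀ u ∈ X, ∀ v, own v ≠ i → (pref i).weak {u} {v} → v ∈ X) {t : ℕ} (hS : S.card ≤ t) :
    (pref i).weak (TTCaux pref own t S i) (TTCaux (Function.update pref i q) own t S i) := by
  induction t generalizing S with
  | zero => exact Pref.weak_refl _ _
  | succ t ih =>
    rcases S.eq_empty_or_nonempty with rfl | hne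
    · exact Or.inr rfl
    by_cases hbest : (pref i).best S ∈ X
    · rw [TTCaux_eq_ownedIn (pref := Function.update pref i q) hS]
      · exact TTCaux_weak_ownedIn hp hS
      · intro u _ hu v hv hvi
        rw [Function.update_self]
        exact hq.strict_of_notMem_of_mem v u (hX _ hbest v hvi (Pref.best_weak _ hv))
          fun huX => hXi u huX hu
    · have hsame (j : N) : (pref j).best S = (Function.update pref i q j).best S := by
        rcases eq_or_ne j i with rfl | hj
        · rw [Function.update_self, hq.best_eq hne hbest]
        · rw [Function.update_of_ne hj]
      rw [TTCaux_succ, TTCaux_succ, ← roundBundle_congr hsame, ← tradedObjects_congr hsame]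
      refine hp.weak_union_left ?_ (ih (card_sdiff_tradedObjects_le hS))
      exact Finset.disjoint_sdiff.mono roundBundle_subset (TTCaux_subset t)

end Rounds

namespace Allocation

lemma mem_bundle_iff (ω : Allocation N O) {o : O} {i : N} : o ∈ ω.bundle i ↔ ω.owner o = i := by
  have howner : o ∈ ω.bundle (ω.owner o) := (ω.cover o).choose_spec
  refine ⟨fun h => ?_, fun h => h ▸ howner⟩
  by_contra hne
  exact ω.disj _ _ hne o howner h

lemma ownedIn_owner_univ [Fintype O] (ω : Allocation N O) (i : N) :
    ownedIn ω.owner Finset.univ i = ω.bundle i := by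
  ext o
  simp only [mem_ownedIn, Finset.mem_univ, true_and, ω.mem_bundle_iff]

end Allocation

section TTC

variable [Fintype O] [Nonempty O] [DecidableEq O] {P : N → Pref O} {ω : Allocation N O} {i : N}

lemma card_TTC : (TTC P ω i).card = (ω.bundle i).card := by
  rw [TTC, card_TTCaux, remaining_eq_empty (Finset.card_univ.trans_le (Nat.le_succ _)),
    Finset.sdiff_empty, ω.ownedIn_owner_univ]

lemma weak_worst_of_mem_TTC {o w : O} (ho : o ∈ TTC P ω i)
    (hw : ∀ y ∈ ω.bundle i, (P i).weak {y} {w}) : (P i).weak {o} {w} := by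
  obtain ⟨a, ha, hoa⟩ := exists_weak_of_mem_TTCaux ho
  rw [ω.ownedIn_owner_univ] at ha
  exact (P i).weak_trans_s1 hoa (hw a ha)

lemma IGEat_TTC (hP : ∀ i, Lexicographic (P i)) : IGEat P (TTC P ω) := IGEat_TTCaux hP _

lemma TTC_weak_update [DecidableEq N] (hP : Lexicographic (P i)) {q : Pref O}
    (hq : TruncationStrategy (ω.bundle i) (P i) q) :
    (P i).weak (TTC P ω i) (TTC (Function.update P i q) ω i) := by
  obtain ⟨x, hq⟩ := truncationStrategy_iff.1 hq
  refine TTCaux_weak_update hP hq (fun u hu hui => hu.1 (ω.mem_bundle_iff.2 hui)) ?_ (Nat.le_succ _)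
  exact fun u hu v hvi huv =>
    ⟨fun hv => hvi (ω.mem_bundle_iff.1 hv), (P i).weak_trans_s1 hu.2 huv⟩

end TTC

section Attractive

variable {ω : Allocation N O} {P : N → Pref O} {i : N} {p q : Pref O} {ωi : Finset O} {o d : O}

/-- An object outside the endowment `ωi` is attractive if it is better than some object of `ωi`. -/
def Attractive (ωi : Finset O) (p : Pref O) (o : O) : Prop :=
  o ∉ ωi ∧ ∃ w ∈ ωi, p.strict {o} {w}

/-- The pairs of an agent and an object attractive to her. The uniqueness proof is by induction on
this set. -/
def attractivePairs (ω : Allocation N O) (P : N → Pref O) : Set (N × O) :=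
  {x | Attractive (ω.bundle x.1) (P x.1) x.2}

lemma mem_attractivePairs :
    (i, o) ∈ attractivePairs ω P ↔ Attractive (ω.bundle i) (P i) o := Iff.rfl

lemma Attractive.of_demotes (hq : Demotes p q (truncatedSet ωi p d)) (ho : Attractive ωi q o) :
    Attractive ωi p o ∧ o ∉ truncatedSet ωi p d := by
  obtain ⟨hoωi, w, hw, how⟩ := ho
  have hwX : w ∉ truncatedSet ωi p d := fun h => h.1 hw
  have hoX : o ∉ truncatedSet ωi p d := fun h =>
    q.asymm how (hq.strict_of_notMem_of_mem _ _ h hwX)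
  exact ⟨⟨hoωi, w, hw, (hq.strict_iff_of_notMem _ _ hoX hwX).2 how⟩, hoX⟩

lemma attractivePairs_update_ssubset [DecidableEq N] (hd : Attractive (ω.bundle i) (P i) d)
    (hq : Demotes (P i) q (truncatedSet (ω.bundle i) (P i) d)) :
    attractivePairs ω (Function.update P i q) ⊂ attractivePairs ω P := by
  refine (Set.ssubset_iff_of_subset ?_).2 ⟨(i, d), hd, fun h => ?_⟩
  · rintro ⟨j, o⟩ h
    rcases eq_or_ne j i with rfl | hj
    · rw [mem_attractivePairs, Function.update_self] at h
      exact (h.of_demotes hq).1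
    · rwa [mem_attractivePairs, Function.update_of_ne hj] at h
  · rw [mem_attractivePairs, Function.update_self] at h
    exact (h.of_demotes hq).2 ⟨hd.1, (P i).weak_refl _⟩

end Attractive

section Uniqueness

variable [Nonempty O] [DecidableEq O] {P : N → Pref O} {i : N}

/-- If `o` is a traded object whose owner does not receive the object `g o` she points to, then the
predecessor of `o` on its cycle is such an object too, so these objects form cycles, along which
all owners gain. -/
lemma pointsTo_mem_of_IGEat (hP : ∀ i, Lexicographic (P i)) {own : O → N} {μ : Allocation N O}
    (hIGE : IGEat P μ.bundle) {S : Finset O}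
    (hkeep : ∀ o ∈ tradedObjects P own S,
      pointsTo P own S o ∉ μ.bundle (own o) → o ∈ μ.bundle (own o)) :
    ∀ o ∈ tradedObjects P own S, pointsTo P own S o ∈ μ.bundle (own o) := by
  set g := pointsTo P own S with hg
  have hbij : Set.BijOn g (tradedObjects P own S) (tradedObjects P own S) :=
    bijOn_pointsTo_tradedObjects
  have g_congr {x y : O} (h : own x = own y) : g x = g y := by rw [hg, pointsTo, h, pointsTo]
  let V := (tradedObjects P own S).filter fun o => g o ∉ μ.bundle (own o)
  have hVimage : V ⊆ V.image g := by
    intro y hy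
    obtain ⟨hyt, hyμ⟩ := Finset.mem_filter.1 hy
    obtain ⟨x, hxt, rfl⟩ := hbij.surjOn hyt
    refine Finset.mem_image_of_mem g (Finset.mem_filter.2 ⟨hxt, fun hxμ => ?_⟩)
    have hown : own (g x) = own x := by
      by_contra hne
      exact μ.disj _ _ hne _ (hkeep _ hyt hyμ) hxμ
    exact hyμ (by rwa [g_congr hown, hown])
  have hmaps : Set.MapsTo g V V := by
    intro o ho
    rw [Finset.eq_of_subset_of_card_le hVimage Finset.card_image_le]
    exact Finset.mem_image_of_mem g ho
  by_contra! ⟨o, hot, hoμ⟩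
  obtain ⟨k, c, hc, hcV, hcg⟩ :=
    exists_fin_cycle V.finite_toSet ⟨o, Finset.mem_filter.2 ⟨hot, hoμ⟩⟩ hmaps
  have hct (ℓ) : c ℓ ∈ tradedObjects P own S := (Finset.mem_filter.1 (hcV ℓ)).1
  have hgc (ℓ) : g (c ℓ) ∉ μ.bundle (own (c ℓ)) := (Finset.mem_filter.1 (hcV ℓ)).2
  have hcμ (ℓ) : c ℓ ∈ μ.bundle (own (c ℓ)) := hkeep _ (hct ℓ) (hgc ℓ)
  refine hIGE ⟨k, c, own ∘ c, hc, fun ℓ m h => ?_, hcμ, fun ℓ => ?_⟩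
  · exact hc (hbij.injOn (hct ℓ) (hct m) (g_congr h))
  · rw [hcg]
    refine ((hP _).strict_insert_erase_iff (hcμ ℓ)).2 ⟨hgc ℓ, ?_⟩
    exact (P _).strict_of_weak_of_ne (pointsTo_weak (tradedObjects_subset (hct ℓ)))
      (ne_of_mem_of_not_mem (hcμ ℓ) (hgc ℓ)).symm

variable [Fintype O] {ω μ : Allocation N O} {t : ℕ}
  (hsub : ∀ j, TTCaux P ω.owner t Finset.univ j ⊆ μ.bundle j)
include hsub

lemma bundle_sdiff_remaining_subset :
    μ.bundle i \ remaining P ω.owner t Finset.univ ⊆ TTCaux P ω.owner t Finset.univ i := by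
  intro y hy
  obtain ⟨hyμ, hyt⟩ := Finset.mem_sdiff.1 hy
  obtain ⟨j, hj⟩ := exists_mem_TTCaux (Finset.mem_univ y) hyt
  have hji : j = i := by
    by_contra hne
    exact μ.disj _ _ hne _ (hsub j hj) hyμ
  exact hji ▸ hj

lemma bundle_inter_remaining_eq (hcard : (μ.bundle i).card = (ω.bundle i).card)
    (hown : ∀ y ∈ μ.bundle i, y ∈ remaining P ω.owner t Finset.univ → y ∈ ω.bundle i) :
    μ.bundle i ∩ remaining P ω.owner t Finset.univ =
      ω.bundle i ∩ remaining P ω.owner t Finset.univ := by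
  set R := remaining P ω.owner t Finset.univ with hR
  have hsubset : μ.bundle i ∩ R ⊆ ω.bundle i ∩ R := fun y hy =>
    have ⟨hyμ, hyR⟩ := Finset.mem_inter.1 hy
    Finset.mem_inter.2 ⟨hown y hyμ hyR, hyR⟩
  refine Finset.eq_of_subset_of_card_le hsubset ?_
  have hle : (μ.bundle i \ R).card ≤ (ω.bundle i \ R).card := calc
    (μ.bundle i \ R).card ≤ (TTCaux P ω.owner t Finset.univ i).card :=
      Finset.card_le_card (bundle_sdiff_remaining_subset hsub)
    _ = (ω.bundle i \ R).card := by
      rw [card_TTCaux]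
      congr 1
      ext o
      simp [mem_ownedIn, ω.mem_bundle_iff, and_comm, hR]
  have hμ := Finset.card_inter_add_card_sdiff (μ.bundle i) R
  have hω := Finset.card_inter_add_card_sdiff (ω.bundle i) R
  omega

/-- The objects of `X` are worse than the one the owner of `o` points to, so demoting them does not
affect the first `t + 1` rounds. -/
lemma strict_TTC_update [DecidableEq N] {o : O} (hp : Lexicographic (P (ω.owner o)))
    {q : Pref O} {X : Set O} (hq : Demotes (P (ω.owner o)) q X)
    (ho : o ∈ tradedObjects P ω.owner (remaining P ω.owner t Finset.univ))
    (hoμ : pointsTo P ω.owner (remaining P ω.owner t Finset.univ) o ∉ μ.bundle (ω.owner o))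
    (hX : ∀ y, (P (ω.owner o)).weak {y}
      {pointsTo P ω.owner (remaining P ω.owner t Finset.univ) o} → y ∉ X) :
    (P (ω.owner o)).strict (TTC (Function.update P (ω.owner o) q) ω (ω.owner o))
      (μ.bundle (ω.owner o)) := by
  set R := remaining P ω.owner t Finset.univ
  set i := ω.owner o
  have hne : R.Nonempty := ⟨o, tradedObjects_subset ho⟩
  have hsame : ∀ s < t + 1, ∀ j, (P j).best (remaining P ω.owner s Finset.univ) =
      (Function.update P i q j).best (remaining P ω.owner s Finset.univ) := by
    intro s hs j
    have hRs : R ⊆ remaining P ω.owner s Finset.univ := remaining_antitone (Nat.le_of_lt_succ hs)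
    rcases eq_or_ne j i with rfl | hj
    · rw [Function.update_self,
        hq.best_eq (hne.mono hRs) (hX _ (Pref.best_weak _ (hRs (pointsTo_mem hne o))))]
    · rw [Function.update_of_ne hj]
  have ht : t + 1 ≤ Fintype.card O + 1 := by
    by_contra! hlt
    exact hne.ne_empty (remaining_eq_empty (Nat.le_of_lt_succ ((Nat.lt_succ_self _).trans hlt)))
  have hTTC : TTCaux P ω.owner t Finset.univ i ∪ roundBundle P ω.owner R i ⊆
      TTC (Function.update P i q) ω i := by
    rw [← TTCaux_succ', TTCaux_congr hsame]
    exact TTCaux_mono ht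
  have hround : pointsTo P ω.owner R o ∈ roundBundle P ω.owner R i :=
    Finset.mem_image_of_mem _ (mem_ownedIn.2 ⟨ho, rfl⟩)
  refine hp.strict_iff.2
    ⟨_, hTTC (Finset.mem_union_right _ hround), hoμ, fun y hyμ hy => ?_⟩
  have hyR : y ∈ R := by
    by_contra hyR
    exact hy (hTTC (Finset.mem_union_left _
      (bundle_sdiff_remaining_subset hsub (Finset.mem_sdiff.2 ⟨hyμ, hyR⟩))))
  exact (P i).strict_of_weak_of_ne (Pref.best_weak _ hyR) (ne_of_mem_of_not_mem hyμ hoμ).symm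

end Uniqueness

section Rules

variable [Fintype O] [Nonempty O] [DecidableEq N] [DecidableEq O]
  {ω : Allocation N O} {φ : (N → Pref O) → Allocation N O} {P : N → Pref O}

section Induction

variable {t : ℕ} {o : O} (hTP : RTP Lexicographic ω φ) (hP : ∀ i, Lexicographic (P i))
  (hsmaller : ∀ Q : N → Pref O, (∀ i, Lexicographic (Q i)) →
    attractivePairs ω Q ⊂ attractivePairs ω P → ∀ i, (φ Q).bundle i = TTC Q ω i)
include hTP hP hsmaller

lemma not_attractive_of_strict
    (hsub : ∀ i, TTCaux P ω.owner t Finset.univ i ⊆ (φ P).bundle i)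
    (ho : o ∈ tradedObjects P ω.owner (remaining P ω.owner t Finset.univ))
    (hoφ : pointsTo P ω.owner (remaining P ω.owner t Finset.univ) o ∉ (φ P).bundle (ω.owner o))
    {d : O} (hd : (P (ω.owner o)).strict
      {pointsTo P ω.owner (remaining P ω.owner t Finset.univ) o} {d}) :
    ¬ Attractive (ω.bundle (ω.owner o)) (P (ω.owner o)) d := by
  intro hattr
  set i := ω.owner o
  obtain ⟨q, hqlex, hq⟩ := exists_lexicographic_demotes (P i) (truncatedSet (ω.bundle i) (P i) d)
  have hQ : ∀ j, Lexicographic (Function.update P i q j) :=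
    (Function.forall_update_iff P fun _ => Lexicographic).2 ⟨hqlex, fun j _ => hP j⟩
  have hgain : (P i).strict ((φ (Function.update P i q)).bundle i) ((φ P).bundle i) := by
    rw [hsmaller _ hQ (attractivePairs_update_ssubset hattr hq) i]
    refine strict_TTC_update hsub (hP i) hq ho hoφ fun y hy hyX => ?_
    exact (P i).not_strict_iff_weak.2 hyX.2 ((P i).strict_of_weak_of_strict hy hd)
  exact (P i).not_strict_iff_weak.2
    (hTP P hP i q hqlex (truncationStrategy_iff.2 ⟨d, hq⟩)) hgain

variable (hBAL : RBAL Lexicographic ω φ) (hWELB : RWELB Lexicographic ω φ)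
include hBAL hWELB

lemma mem_of_pointsTo_notMem
    (hsub : ∀ i, TTCaux P ω.owner t Finset.univ i ⊆ (φ P).bundle i)
    (ho : o ∈ tradedObjects P ω.owner (remaining P ω.owner t Finset.univ))
    (hoφ : pointsTo P ω.owner (remaining P ω.owner t Finset.univ) o ∉ (φ P).bundle (ω.owner o)) :
    o ∈ (φ P).bundle (ω.owner o) := by
  set i := ω.owner o with hi
  have hown : ∀ y ∈ (φ P).bundle i, y ∈ remaining P ω.owner t Finset.univ → y ∈ ω.bundle i := by
    intro y hyφ hyR
    by_contra hyω
    have hlt : (P i).strict {pointsTo P ω.owner (remaining P ω.owner t Finset.univ) o} {y} :=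
      (P i).strict_of_weak_of_ne (Pref.best_weak _ hyR) (ne_of_mem_of_not_mem hyφ hoφ).symm
    obtain ⟨w, hw, hworst⟩ := (P i).exists_worst (ω.nonempty i)
    have hyw : (P i).strict {y} {w} :=
      (P i).strict_of_weak_of_ne (hWELB P hP i y hyφ w hw hworst)
        (ne_of_mem_of_not_mem hw hyω).symm
    exact not_attractive_of_strict hTP hP hsmaller hsub ho hoφ hlt ⟨hyω, w, hw, hyw⟩
  have hoω : o ∈ ω.bundle i ∩ remaining P ω.owner t Finset.univ :=
    Finset.mem_inter.2 ⟨ω.mem_bundle_iff.2 hi.symm, tradedObjects_subset ho⟩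
  rw [← bundle_inter_remaining_eq hsub (hBAL P hP i) hown] at hoω
  exact (Finset.mem_inter.1 hoω).1

lemma TTCaux_subset_bundle (hIGE : RIGE Lexicographic φ) (t : ℕ) (i : N) :
    TTCaux P ω.owner t Finset.univ i ⊆ (φ P).bundle i := by
  induction t generalizing i with
  | zero => exact Finset.empty_subset _
  | succ t ih =>
    rw [TTCaux_succ']
    refine Finset.union_subset (ih i) (Finset.image_subset_iff.2 fun o ho => ?_)
    obtain ⟨hot, rfl⟩ := mem_ownedIn.1 ho
    exact pointsTo_mem_of_IGEat hP (hIGE P hP)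
      (fun _ => mem_of_pointsTo_notMem hTP hP hsmaller hBAL hWELB ih) o hot

end Induction

theorem bundle_eq_TTC [Finite N] (hBAL : RBAL Lexicographic ω φ) (hIGE : RIGE Lexicographic φ)
    (hWELB : RWELB Lexicographic ω φ) (hTP : RTP Lexicographic ω φ)
    (hP : ∀ i, Lexicographic (P i)) (i : N) : (φ P).bundle i = TTC P ω i := by
  induction hA : attractivePairs ω P using WellFoundedLT.induction generalizing P i with
  | _ A ih =>
    subst hA
    have hsub : TTC P ω i ⊆ (φ P).bundle i :=
      TTCaux_subset_bundle hTP hP (fun Q hQ hlt j => ih _ hlt hQ j rfl) hBAL hWELB hIGE _ i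
    exact (Finset.eq_of_subset_of_card_le hsub (by rw [hBAL P hP, card_TTC])).symm

end Rules

/-- On the lexicographic domain, a rule satisfies BAL, IGE, WELB and TP
iff it equals the generalized Top Trading Cycles rule. -/
theorem stmt1 {N O : Type} [Fintype N] [Fintype O] [DecidableEq N] [DecidableEq O] [Nonempty O]
    (hN : 2 ≤ Fintype.card N) (hNO : Fintype.card N ≤ Fintype.card O)
    (ω : Allocation N O) (φ : (N → Pref O) → Allocation N O) :
    (RBAL Lexicographic ω φ ∧ RIGE Lexicographic φ ∧ RWELB Lexicographic ω φ ∧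
        RTP Lexicographic ω φ) ↔
      ∀ P : N → Pref O, (∀ i, Lexicographic (P i)) → ∀ i, (φ P).bundle i = TTC P ω i := by
  refine ⟨fun ⟨hBAL, hIGE, hWELB, hTP⟩ P hP => bundle_eq_TTC hBAL hIGE hWELB hTP hP, fun hφ => ?_⟩
  refine ⟨fun P hP i => ?_, fun P hP => ?_, fun P hP i o ho w _ hw => ?_, fun P hP i q hq htr => ?_⟩
  · rw [hφ P hP, card_TTC]
  · rw [show (φ P).bundle = TTC P ω from funext (hφ P hP)]
    exact IGEat_TTC hP
  · rw [hφ P hP] at ho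
    exact weak_worst_of_mem_TTC ho hw
  · have hQ : ∀ j, Lexicographic (Function.update P i q j) :=
      (Function.forall_update_iff P fun _ => Lexicographic).2 ⟨hq, fun j _ => hP j⟩
    rw [hφ P hP, hφ _ hQ]
    exact TTC_weak_update (hP i) htr

end Realloc
end
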